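/- Let g be the simple complex Lie algebra of type G₂. Then there exists an sl₂-triple (e,h,f) in g such that the centralizer g_e has dimension 6, its derived subalgebra [g_e, g_e] has dimension 5, and e ∉ [g_e, g_e]; consequently g_e is the direct sum of the span of e and [g_e, g_e]. -/

import Mathlib

namespace PaperStmt

open LieAlgebra Module

variable (R : Type*) {L : Type*} [CommRing R] [LieRing L] [LieAlgebra R L]

/-- The centralizer `g_x = {y ∈ g | ⁅y, x⁆ = 0}` of an element of a Lie algebra,
as a Lie subalgebra. -/
def centralizerOf (x : L) : LieSubalgebra R L where
  carrier := {y : L | ⁅y, x⁆ = 0}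
  add_mem' := fun {a b} (ha : ⁅a, x⁆ = 0) (hb : ⁅b, x⁆ = 0) => by
    show ⁅a + b, x⁆ = 0
    rw [add_lie, ha, hb, add_zero]
  zero_mem' := zero_lie x
  smul_mem' := fun c a (ha : ⁅a, x⁆ = 0) => by
    show ⁅c • a, x⁆ = 0
    rw [smul_lie, ha, smul_zero]
  lie_mem' := fun {a b} (ha : ⁅a, x⁆ = 0) (hb : ⁅b, x⁆ = 0) => by
    show ⁅⁅a, b⁆, x⁆ = 0
    rw [lie_lie, ha, hb, lie_zero, lie_zero, sub_zero]

/-- The subspace spanned by the brackets `⁅x, y⁆` with `x ∈ A`, `y ∈ B`. -/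
def bracketSpan (A B : Submodule R L) : Submodule R L :=
  Submodule.span R {z : L | ∃ x ∈ A, ∃ y ∈ B, z = ⁅x, y⁆}

/-- The derived subalgebra `[k, k]` of a Lie subalgebra `k`, as a subspace of the
ambient Lie algebra: the span of all brackets `⁅a, b⁆` with `a, b ∈ k`. -/
def derivedOf (K : LieSubalgebra R L) : Submodule R L :=
  bracketSpan R K.toSubmodule K.toSubmodule

/-- An element `e` of a Lie algebra is reachable if `e ∈ [g_e, g_e]`. -/
def IsReachable (e : L) : Prop :=
  e ∈ derivedOf R (centralizerOf R e)

/-- `g(k)`, the `k`-eigenspace of `ad h`. -/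
def gradePiece (h : L) (k : ℤ) : Submodule R L :=
  Module.End.eigenspace (LieAlgebra.ad R L h) (k : R)

/-- `g(k)_e = g(k) ∩ g_e`. -/
def gradePieceCent (e h : L) (k : ℤ) : Submodule R L :=
  gradePiece R h k ⊓ (centralizerOf R e).toSubmodule

/-- `g(≥1)_e`, the sum of the subspaces `g(k)_e` over all `k ≥ 1`. -/
def gradeGeOneCent (e h : L) : Submodule R L :=
  ⨆ k ∈ {k : ℤ | 1 ≤ k}, gradePieceCent R e h k

/-!
Take for `e` a root vector of the short simple root, in its standard triple. The highest root is
long and orthogonal to it, and under the two commuting copies of `sl₂`, the second one `𝔰` being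
attached to the highest root, `g₂ = sl₂ ⊕ 𝔰 ⊕ (V₃ ⊗ V₁)`, where `Vₙ` has highest weight `n`. Taking
highest weight vectors for the first copy gives `g_e = ⟨e⟩ ⊕ 𝔰 ⊕ V₁`. Since `e` is central in `g_e`,
`𝔰` is perfect, `V₁` is a nontrivial simple `𝔰`-module and `[V₁, V₁] = 0`, the derived algebra is
`𝔰 ⊕ V₁`, of dimension 5.

In terms of the Serre generators, the iterated brackets of the simple root vectors span `g₂` by the
triangular decomposition. Heights separate the six basis vectors of `g_e`, and also the images under
`ad e` of the remaining eight, so these families are independent once their members are nonzero; the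
relations reduce this to `h₀ ≠ 0`, which is visible in the 7-dimensional representation.
-/

section SerreSystem

variable {B M : Type*} [LieRing M]

/-- Elements `h i`, `e i`, `f i` of a Lie ring satisfying the Serre relations of the integer
matrix `A`, with the convention `⁅h i, e j⁆ = A i j • e j` of `Matrix.ToLieAlgebra`. -/
structure IsSerreSystem (A : Matrix B B ℤ) (h e f : B → L) : Prop where
  lie_h_h (i j : B) : ⁅h i, h j⁆ = 0
  lie_e_f_same (i : B) : ⁅e i, f i⁆ = h i
  lie_e_f_ne {i j : B} (hij : i ≠ j) : ⁅e i, f j⁆ = 0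
  lie_h_e (i j : B) : ⁅h i, e j⁆ = A i j • e j
  lie_h_f (i j : B) : ⁅h i, f j⁆ = -(A i j • f j)
  serre_e (i j : B) : (fun x ↦ ⁅e i, x⁆)^[(-A i j).toNat] ⁅e i, e j⁆ = 0
  serre_f (i j : B) : (fun x ↦ ⁅f i, x⁆)^[(-A i j).toNat] ⁅f i, f j⁆ = 0

namespace IsSerreSystem

variable {A : Matrix B B ℤ} {h e f : B → L}

lemma lie_f_e_same (s : IsSerreSystem A h e f) (i : B) : ⁅f i, e i⁆ = -h i := by
  rw [← lie_skew, s.lie_e_f_same]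

lemma lie_f_e_ne (s : IsSerreSystem A h e f) {i j : B} (hij : i ≠ j) : ⁅f i, e j⁆ = 0 := by
  rw [← lie_skew, s.lie_e_f_ne hij.symm, neg_zero]

lemma isSl2Triple (s : IsSerreSystem A h e f) {i : B} (hA : A i i = 2) (hi : h i ≠ 0) :
    IsSl2Triple (h i) (e i) (f i) where
  h_ne_zero := hi
  lie_e_f := s.lie_e_f_same i
  lie_h_e_nsmul := by rw [s.lie_h_e, hA, ofNat_zsmul]
  lie_h_f_nsmul := by rw [s.lie_h_f, hA, ofNat_zsmul]

lemma symm (s : IsSerreSystem A h e f) : IsSerreSystem A (-h) f e where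
  lie_h_h i j := by simp [s.lie_h_h]
  lie_e_f_same i := by rw [s.lie_f_e_same, Pi.neg_apply]
  lie_e_f_ne := s.lie_f_e_ne
  lie_h_e i j := by rw [Pi.neg_apply, neg_lie, s.lie_h_f, neg_neg]
  lie_h_f i j := by rw [Pi.neg_apply, neg_lie, s.lie_h_e]
  serre_e := s.serre_f
  serre_f := s.serre_e

lemma map (s : IsSerreSystem A h e f) (φ : L →ₗ⁅ℤ⁆ M) :
    IsSerreSystem A (φ ∘ h) (φ ∘ e) (φ ∘ f) := by
  have map_serre {x : B → L} {i j : B} {n : ℕ} (hx : (fun y ↦ ⁅x i, y⁆)^[n] ⁅x i, x j⁆ = 0) :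
      (fun y ↦ ⁅φ (x i), y⁆)^[n] ⁅φ (x i), φ (x j)⁆ = 0 := by
    have commute : Function.Semiconj φ (fun y ↦ ⁅x i, y⁆) (fun y ↦ ⁅φ (x i), y⁆) :=
      fun y ↦ φ.map_lie _ _
    rw [← φ.map_lie, ← (commute.iterate_right n).eq, hx, map_zero]
  constructor
  · exact fun i j ↦ by simp only [Function.comp_apply, ← φ.map_lie, s.lie_h_h, map_zero]
  · exact fun i ↦ by simp only [Function.comp_apply, ← φ.map_lie, s.lie_e_f_same]
  · exact fun hij ↦ by simp only [Function.comp_apply, ← φ.map_lie, s.lie_e_f_ne hij, map_zero]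
  · exact fun i j ↦ by simp only [Function.comp_apply, ← φ.map_lie, s.lie_h_e, map_zsmul]
  · exact fun i j ↦ by simp only [Function.comp_apply, ← φ.map_lie, s.lie_h_f, map_neg, map_zsmul]
  · exact fun i j ↦ map_serre (s.serre_e i j)
  · exact fun i j ↦ map_serre (s.serre_f i j)

end IsSerreSystem

end SerreSystem

section ToLieAlgebra

open CartanMatrix CartanMatrix.Relations

variable {B : Type*} [DecidableEq B] (A : Matrix B B ℤ)

variable {R} in
lemma map_ad_pow {L' : Type*} [LieRing L'] [LieAlgebra R L'] (φ : L →ₗ⁅R⁆ L') (x y : L) (n : ℕ) :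
    φ ((ad R L x ^ n) y) = (fun z ↦ ⁅φ x, z⁆)^[n] (φ y) := by
  have commute : Function.Semiconj φ (ad R L x) (fun z ↦ ⁅φ x, z⁆) := fun z ↦ φ.map_lie x z
  rw [Module.End.pow_apply, (commute.iterate_right n).eq]

variable {R A} in
lemma isSerreSystem_iff_forall_mem_toSet (φ : FreeLieAlgebra R (Generators B) →ₗ⁅R⁆ L) :
    IsSerreSystem A (fun i ↦ φ (.of R (.H i))) (fun i ↦ φ (.of R (.E i)))
      (fun i ↦ φ (.of R (.F i))) ↔ ∀ x ∈ toSet R A, φ x = 0 := by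
  constructor
  · rintro s _ (((((⟨⟨i, j⟩, rfl⟩ | ⟨⟨i, j⟩, rfl⟩) | ⟨⟨i, j⟩, rfl⟩) | ⟨⟨i, j⟩, rfl⟩) |
      ⟨⟨i, j⟩, rfl⟩) | ⟨⟨i, j⟩, rfl⟩)
    · simp [HH, s.lie_h_h]
    · obtain rfl | hij := eq_or_ne i j
      · simp [EF, s.lie_e_f_same]
      · simp [EF, hij, s.lie_e_f_ne hij]
    · simp [HE, s.lie_h_e]
    · simp [HF, s.lie_h_f]
    · simp [adE, map_ad_pow, s.serre_e]
    · simp [adF, map_ad_pow, s.serre_f]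
  · intro rel
    constructor
    · intro i j
      simpa [HH] using rel (HH R (i, j)) (by simp [toSet])
    · intro i
      simpa [EF, sub_eq_zero] using rel (EF R (i, i)) (by simp [toSet])
    · intro i j hij
      simpa [EF, hij] using rel (EF R (i, j)) (by simp [toSet])
    · intro i j
      simpa [HE, sub_eq_zero] using rel (HE R A (i, j)) (by simp [toSet])
    · intro i j
      simpa [HF, add_eq_zero_iff_eq_neg] using rel (HF R A (i, j)) (by simp [toSet])
    · intro i j
      simpa [adE, map_ad_pow] using rel (adE R A (i, j)) (by simp [toSet])
    · intro i j
      simpa [adF, map_ad_pow] using rel (adF R A (i, j)) (by simp [toSet])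

/-- The quotient map presenting `A.ToLieAlgebra R` by the Serre generators. -/
noncomputable def serreMk : FreeLieAlgebra R (Generators B) →ₗ⁅R⁆ A.ToLieAlgebra R :=
  { (toIdeal R A).toSubmodule.mkQ with map_lie' := rfl }

/-- The class of the generator `H i` in `A.ToLieAlgebra R`. -/
noncomputable def serreH (i : B) : A.ToLieAlgebra R := serreMk R A (.of R (.H i))

/-- The class of the generator `E i` in `A.ToLieAlgebra R`. -/
noncomputable def serreE (i : B) : A.ToLieAlgebra R := serreMk R A (.of R (.E i))

/-- The class of the generator `F i` in `A.ToLieAlgebra R`. -/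
noncomputable def serreF (i : B) : A.ToLieAlgebra R := serreMk R A (.of R (.F i))

lemma serreMk_eq_zero_iff {x : FreeLieAlgebra R (Generators B)} :
    serreMk R A x = 0 ↔ x ∈ toIdeal R A :=
  Submodule.Quotient.mk_eq_zero _

lemma isSerreSystem_serre : IsSerreSystem A (serreH R A) (serreE R A) (serreF R A) :=
  (isSerreSystem_iff_forall_mem_toSet (serreMk R A)).2 fun _ hx ↦
    (serreMk_eq_zero_iff R A).2 (LieSubmodule.subset_lieSpan hx)

variable {A} in
lemma serreH_ne_zero {h e f : B → L} (s : IsSerreSystem A h e f) {i : B} (hi : h i ≠ 0) :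
    serreH R A i ≠ 0 := by
  let φ : FreeLieAlgebra R (Generators B) →ₗ⁅R⁆ L := FreeLieAlgebra.lift R (Generators.rec h e f)
  have relations : ∀ x ∈ toSet R A, φ x = 0 :=
    (isSerreSystem_iff_forall_mem_toSet φ).1 (by simpa [φ] using s)
  have ideal_le_ker : toIdeal R A ≤ φ.ker :=
    LieSubmodule.lieSpan_le.2 fun x hx ↦ φ.mem_ker.2 (relations x hx)
  intro hzero
  have : φ (.of R (.H i)) = 0 := φ.mem_ker.1 (ideal_le_ker ((serreMk_eq_zero_iff R A).1 hzero))
  exact hi (by simpa [φ] using this)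

lemma lieSpan_range_freeLieAlgebra_of (X : Type*) :
    LieSubalgebra.lieSpan R (FreeLieAlgebra R X) (Set.range (FreeLieAlgebra.of R)) = ⊤ := by
  set S := LieSubalgebra.lieSpan R (FreeLieAlgebra R X) (Set.range (FreeLieAlgebra.of R))
  let ι : FreeLieAlgebra R X →ₗ⁅R⁆ S :=
    FreeLieAlgebra.lift R fun x ↦ ⟨.of R x, LieSubalgebra.subset_lieSpan ⟨x, rfl⟩⟩
  have incl_comp : S.incl.comp ι = LieHom.id := by
    ext x
    simp [ι]
  refine eq_top_iff.2 fun y _ ↦ ?_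
  have : S.incl (ι y) = y := DFunLike.congr_fun incl_comp y
  exact this ▸ (ι y).2

lemma lieSpan_serre_eq_top :
    LieSubalgebra.lieSpan R _ (Set.range (serreE R A) ∪ Set.range (serreF R A)) = ⊤ := by
  set S := LieSubalgebra.lieSpan R _ (Set.range (serreE R A) ∪ Set.range (serreF R A))
  have mem_E (i : B) : serreE R A i ∈ S := LieSubalgebra.subset_lieSpan (.inl ⟨i, rfl⟩)
  have mem_F (i : B) : serreF R A i ∈ S := LieSubalgebra.subset_lieSpan (.inr ⟨i, rfl⟩)
  have mem_H (i : B) : serreH R A i ∈ S :=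
    (isSerreSystem_serre R A).lie_e_f_same i ▸ S.lie_mem (mem_E i) (mem_F i)
  have of_mem (g : Generators B) : FreeLieAlgebra.of R g ∈ S.comap (serreMk R A) := by
    obtain i | i | i := g
    exacts [mem_H i, mem_E i, mem_F i]
  have comap_eq_top : S.comap (serreMk R A) = ⊤ :=
    eq_top_iff.2 <| lieSpan_range_freeLieAlgebra_of R (Generators B) ▸
      LieSubalgebra.lieSpan_le.2 (Set.range_subset_iff.2 of_mem)
  refine eq_top_iff.2 fun y _ ↦ ?_
  obtain ⟨x, rfl⟩ := (toIdeal R A).toSubmodule.mkQ_surjective y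
  exact (comap_eq_top ▸ LieSubalgebra.mem_top x : x ∈ S.comap (serreMk R A))

end ToLieAlgebra

section Linear

variable {R} in
lemma span_eq_top_of_lieSpan_eq_top {S T : Set L} (hS : LieSubalgebra.lieSpan R L S = ⊤)
    (subset : S ⊆ Submodule.span R T) (lie_mem : ∀ s ∈ S, ∀ t ∈ T, ⁅s, t⁆ ∈ Submodule.span R T) :
    Submodule.span R T = ⊤ := by
  set W := Submodule.span R T
  have mem_lieSpan (x : L) : x ∈ LieSubalgebra.lieSpan R L S := hS ▸ LieSubalgebra.mem_top x
  have normalizes (x : L) : ∀ w ∈ W, ⁅x, w⁆ ∈ W := by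
    induction mem_lieSpan x using LieSubalgebra.lieSpan_induction with
    | mem s hs => exact (Submodule.span_le (p := W.comap (ad R L s : L →ₗ[R] L))).2 (lie_mem s hs)
    | zero => simp
    | add x y _ _ hx hy => exact fun w hw ↦ add_lie x y w ▸ W.add_mem (hx w hw) (hy w hw)
    | smul c x _ hx => exact fun w hw ↦ smul_lie c x w ▸ W.smul_mem c (hx w hw)
    | lie x y _ _ hx hy =>
      exact fun w hw ↦ lie_lie x y w ▸ W.sub_mem (hx _ (hy w hw)) (hy _ (hx w hw))
  refine eq_top_iff.2 fun x _ ↦ ?_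
  induction mem_lieSpan x using LieSubalgebra.lieSpan_induction with
  | mem s hs => exact subset hs
  | zero => exact W.zero_mem
  | add x y _ _ hx hy => exact W.add_mem (hx trivial) (hy trivial)
  | smul c x _ hx => exact W.smul_mem c (hx trivial)
  | lie x y _ _ _ hy => exact normalizes x y (hy trivial)

lemma lie_lie_eq_zsmul {z x y : L} {m n : ℤ} (hx : ⁅z, x⁆ = m • x) (hy : ⁅z, y⁆ = n • y) :
    ⁅z, ⁅x, y⁆⁆ = (m + n) • ⁅x, y⁆ := by
  rw [leibniz_lie, hx, hy, zsmul_lie, lie_zsmul, add_smul]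

variable {R} in
lemma mem_gradePiece_iff {h x : L} {n : ℤ} : x ∈ gradePiece R h n ↔ ⁅h, x⁆ = n • x := by
  rw [gradePiece, Module.End.mem_eigenspace_iff, ad_apply, Int.cast_smul_eq_zsmul]

variable {R} in
lemma lie_mem_gradePiece {h x y : L} {m n : ℤ} (hx : x ∈ gradePiece R h m)
    (hy : y ∈ gradePiece R h n) : ⁅x, y⁆ ∈ gradePiece R h (m + n) :=
  mem_gradePiece_iff.2 (lie_lie_eq_zsmul (mem_gradePiece_iff.1 hx) (mem_gradePiece_iff.1 hy))

variable {R} in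
lemma linearIndependent_of_mem_gradePiece [CharZero R] [IsDomain R] [IsTorsionFree R L]
    {ι : Type*} {h : L} {n : ι → ℤ} (hn : Function.Injective n) {x : ι → L}
    (hx : ∀ i, x i ∈ gradePiece R h (n i)) (hx0 : ∀ i, x i ≠ 0) : LinearIndependent R x :=
  Module.End.eigenvectors_linearIndependent' (ad R L h) (fun i ↦ (n i : R))
    (Int.cast_injective.comp hn) x fun i ↦ ⟨hx i, hx0 i⟩

variable {R} in
lemma ker_eq_span_range {V W ι κ : Type*} [AddCommGroup V] [Module R V] [AddCommGroup W]
    [Module R W] {T : V →ₗ[R] W} {u : ι → V} {w : κ → V}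
    (span_eq_top : Submodule.span R (Set.range u) ⊔ Submodule.span R (Set.range w) = ⊤)
    (hu : ∀ i, T (u i) = 0) (hw : LinearIndependent R (T ∘ w)) :
    LinearMap.ker T = Submodule.span R (Set.range u) := by
  have span_le_ker : Submodule.span R (Set.range u) ≤ LinearMap.ker T :=
    Submodule.span_le.2 (Set.range_subset_iff.2 hu)
  refine le_antisymm (fun x hx ↦ ?_) span_le_ker
  obtain ⟨y, hy, z, hz, rfl⟩ := Submodule.mem_sup.1 (span_eq_top ▸ Submodule.mem_top : x ∈ _)
  have z_mem_ker : z ∈ LinearMap.ker T :=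
    ((LinearMap.ker T).add_mem_iff_right (span_le_ker hy)).1 hx
  have z_eq_zero : z = 0 :=
    Submodule.disjoint_def.1 (Submodule.range_ker_disjoint hw) z hz z_mem_ker
  rwa [z_eq_zero, add_zero]

lemma centralizerOf_toSubmodule_eq_ker (x : L) :
    (centralizerOf R x).toSubmodule = LinearMap.ker (ad R L x : L →ₗ[R] L) := by
  ext y
  rw [LinearMap.mem_ker, ad_apply, ← lie_skew, neg_eq_zero]
  rfl

lemma bracketSpan_span (s t : Set L) :
    bracketSpan R (Submodule.span R s) (Submodule.span R t) =
      Submodule.span R (Set.image2 (fun x y ↦ ⁅x, y⁆) s t) := by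
  apply le_antisymm
  · rw [bracketSpan, Submodule.span_le]
    rintro _ ⟨x, hx, y, hy, rfl⟩
    exact Submodule.map₂_span_span R (LieModule.toEnd R L L : L →ₗ[R] End R L) s t ▸
      Submodule.apply_mem_map₂ _ hx hy
  · rw [Submodule.span_le]
    rintro _ ⟨x, hx, y, hy, rfl⟩
    exact Submodule.subset_span
      ⟨x, Submodule.subset_span hx, y, Submodule.subset_span hy, rfl⟩

variable {R}

lemma lie_mem_derivedOf {k : LieSubalgebra R L} {x y : L} (hx : x ∈ k) (hy : y ∈ k) :
    ⁅x, y⁆ ∈ derivedOf R k :=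
  Submodule.subset_span ⟨x, hx, y, hy, rfl⟩

lemma mem_derivedOf_of_lie_eq_zsmul {K : Type*} [Field K] [CharZero K] [LieAlgebra K L]
    {k : LieSubalgebra K L} {x y z : L} {n : ℤ} (hx : x ∈ k) (hy : y ∈ k) (hn : n ≠ 0)
    (lie_eq : ⁅x, y⁆ = n • z) : z ∈ derivedOf K k := by
  have smul_mem := lie_mem_derivedOf hx hy
  rw [lie_eq, ← Int.cast_smul_eq_zsmul K] at smul_mem
  exact (Submodule.smul_mem_iff _ (Int.cast_ne_zero.2 hn)).1 smul_mem

lemma derivedOf_centralizerOf_eq_span {ι : Type*} [LinearOrder ι] {x : L} {v : ι → L}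
    (centralizer_eq : (centralizerOf R x).toSubmodule = Submodule.span R (insert x (Set.range v)))
    (lie_mem : ∀ i j, i < j → ⁅v i, v j⁆ ∈ Submodule.span R (Set.range v))
    (mem_derivedOf : ∀ i, v i ∈ derivedOf R (centralizerOf R x)) :
    derivedOf R (centralizerOf R x) = Submodule.span R (Set.range v) := by
  have lie_v_x (i : ι) : ⁅v i, x⁆ = 0 := by
    change v i ∈ (centralizerOf R x).toSubmodule
    exact centralizer_eq ▸ Submodule.subset_span (.inr ⟨i, rfl⟩)
  refine le_antisymm ?_ (Submodule.span_le.2 (Set.range_subset_iff.2 mem_derivedOf))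
  rw [derivedOf, centralizer_eq, bracketSpan_span, Submodule.span_le]
  rintro _ ⟨_, rfl | ⟨i, rfl⟩, _, rfl | ⟨j, rfl⟩, rfl⟩
  · simp
  · simp [← lie_skew _ (v j), lie_v_x]
  · simp [lie_v_x]
  · obtain hij | rfl | hji := lt_trichotomy i j
    · exact lie_mem i j hij
    · simp
    · simpa only [SetLike.mem_coe, lie_skew] using neg_mem (lie_mem j i hji)

end Linear

section G₂Model

open CartanMatrix

attribute [local instance] LieRing.ofAssociativeRing LieAlgebra.ofAssociativeAlgebra

/-- The diagonal coroots in the 7-dimensional representation of `g₂`, whose weights are listed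
from highest to lowest. -/
def modelH : Fin 2 → Matrix (Fin 7) (Fin 7) ℤ :=
  ![.diagonal ![1, -1, 2, 0, -2, 1, -1], .diagonal ![0, 1, -1, 0, 1, -1, 0]]

/-- The simple root vectors in the 7-dimensional representation of `g₂`. -/
def modelE : Fin 2 → Matrix (Fin 7) (Fin 7) ℤ :=
  ![.single 0 1 1 + .single 2 3 2 + .single 3 4 1 + .single 5 6 1, .single 1 2 1 + .single 4 5 1]

/-- The negative simple root vectors in the 7-dimensional representation of `g₂`, obtained by
reversing the order of the weights. -/
def modelF (i : Fin 2) : Matrix (Fin 7) (Fin 7) ℤ :=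
  (modelE i).submatrix Fin.rev Fin.rev

lemma isSerreSystem_model : IsSerreSystem G₂ modelH modelE modelF := by
  constructor <;> decide +kernel

variable (K : Type*) [CommRing K] [Nontrivial K]

lemma serreH_G₂_ne_zero : serreH K G₂ 0 ≠ 0 := by
  let φ : Matrix (Fin 7) (Fin 7) ℤ →ₗ⁅ℤ⁆ Matrix (Fin 7) (Fin 7) K :=
    ((Int.castRingHom K).mapMatrix).toIntAlgHom.toLieHom
  refine serreH_ne_zero K (isSerreSystem_model.map φ) fun hzero ↦ ?_
  have : ((1 : ℤ) : K) = 0 := congrFun (congrFun hzero 0) 0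
  simp at this

end G₂Model

section RootVectors

/-- The root vector of `α₀ + α₁` built from the simple root vectors `e` of `G₂`, where `α₀` is the
short simple root. -/
def root₁₁ (e : Fin 2 → L) : L := ⁅e 0, e 1⁆

/-- The root vector of `2α₀ + α₁`; see `root₁₁`. -/
def root₂₁ (e : Fin 2 → L) : L := ⁅e 0, root₁₁ e⁆

/-- The root vector of `3α₀ + α₁`; see `root₁₁`. -/
def root₃₁ (e : Fin 2 → L) : L := ⁅e 0, root₂₁ e⁆

/-- The root vector of the highest root `3α₀ + 2α₁`; see `root₁₁`. -/
def root₃₂ (e : Fin 2 → L) : L := ⁅e 1, root₃₁ e⁆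

/-- The coroot of the highest root of `G₂`. -/
def highestCoroot (h : Fin 2 → L) : L := h 0 + (2 : ℤ) • h 1

/-- The positive root vectors of `G₂` built from the simple root vectors `e`, by height. -/
def posRoot (e : Fin 2 → L) : Fin 6 → L :=
  ![e 0, e 1, root₁₁ e, root₂₁ e, root₃₁ e, root₃₂ e]

section Weights

variable {e : Fin 2 → L} {z : L} {m n : ℤ}

lemma lie_root₁₁ (h₀ : ⁅z, e 0⁆ = m • e 0) (h₁ : ⁅z, e 1⁆ = n • e 1) :
    ⁅z, root₁₁ e⁆ = (m + n) • root₁₁ e :=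
  lie_lie_eq_zsmul h₀ h₁

lemma lie_root₂₁ (h₀ : ⁅z, e 0⁆ = m • e 0) (h₁ : ⁅z, e 1⁆ = n • e 1) :
    ⁅z, root₂₁ e⁆ = (m + (m + n)) • root₂₁ e :=
  lie_lie_eq_zsmul h₀ (lie_root₁₁ h₀ h₁)

lemma lie_root₃₁ (h₀ : ⁅z, e 0⁆ = m • e 0) (h₁ : ⁅z, e 1⁆ = n • e 1) :
    ⁅z, root₃₁ e⁆ = (m + (m + (m + n))) • root₃₁ e :=
  lie_lie_eq_zsmul h₀ (lie_root₂₁ h₀ h₁)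

lemma lie_root₃₂ (h₀ : ⁅z, e 0⁆ = m • e 0) (h₁ : ⁅z, e 1⁆ = n • e 1) :
    ⁅z, root₃₂ e⁆ = (n + (m + (m + (m + n)))) • root₃₂ e :=
  lie_lie_eq_zsmul h₁ (lie_root₃₁ h₀ h₁)

end Weights

namespace IsSerreSystem

variable {h e f : Fin 2 → L} (s : IsSerreSystem CartanMatrix.G₂ h e f)

include s

lemma lie_h₀_e₀ : ⁅h 0, e 0⁆ = (2 : ℤ) • e 0 := s.lie_h_e 0 0

lemma lie_h₀_e₁ : ⁅h 0, e 1⁆ = (-3 : ℤ) • e 1 := s.lie_h_e 0 1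

lemma lie_h₁_e₀ : ⁅h 1, e 0⁆ = (-1 : ℤ) • e 0 := s.lie_h_e 1 0

lemma lie_h₁_e₁ : ⁅h 1, e 1⁆ = (2 : ℤ) • e 1 := s.lie_h_e 1 1

lemma lie_e₀_root₃₁ : ⁅e 0, root₃₁ e⁆ = 0 := s.serre_e 0 1

lemma lie_e₁_root₁₁ : ⁅e 1, root₁₁ e⁆ = 0 := by
  have serre : ⁅e 1, ⁅e 1, e 0⁆⁆ = 0 := s.serre_e 1 0
  rw [root₁₁, ← lie_skew (e 0), lie_neg, serre, neg_zero]

lemma lie_e₁_root₂₁ : ⁅e 1, root₂₁ e⁆ = 0 := by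
  rw [root₂₁, leibniz_lie, s.lie_e₁_root₁₁, ← lie_skew (e 1) (e 0), ← root₁₁, neg_lie, lie_self,
    lie_zero, neg_zero, add_zero]

lemma lie_root₁₁_root₂₁ : ⁅root₁₁ e, root₂₁ e⁆ = -root₃₂ e := by
  conv_lhs => rw [root₁₁, lie_lie]
  rw [s.lie_e₁_root₂₁, lie_zero, zero_sub, ← root₃₁, ← root₃₂]

lemma lie_e₁_root₃₂ : ⁅e 1, root₃₂ e⁆ = 0 := by
  rw [← neg_neg (root₃₂ e), ← s.lie_root₁₁_root₂₁, lie_neg, leibniz_lie, s.lie_e₁_root₁₁,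
    s.lie_e₁_root₂₁, zero_lie, lie_zero, add_zero, neg_zero]

lemma lie_e₀_root₃₂ [IsAddTorsionFree L] : ⁅e 0, root₃₂ e⁆ = 0 := by
  have eq_lie : ⁅e 0, root₃₂ e⁆ = ⁅root₁₁ e, root₃₁ e⁆ := by
    rw [root₃₂, leibniz_lie, s.lie_e₀_root₃₁, lie_zero, add_zero, ← root₁₁]
  have eq_neg_lie : ⁅e 0, root₃₂ e⁆ = -⁅root₁₁ e, root₃₁ e⁆ := by
    rw [← neg_neg (root₃₂ e), ← s.lie_root₁₁_root₂₁, lie_neg, leibniz_lie, ← root₂₁, ← root₃₁,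
      lie_self, zero_add]
  exact self_eq_neg.1 (eq_lie ▸ eq_neg_lie)

lemma lie_f₀_root₁₁ : ⁅f 0, root₁₁ e⁆ = (3 : ℤ) • e 1 := by
  rw [root₁₁, leibniz_lie, s.lie_f_e_same, s.lie_f_e_ne zero_ne_one, neg_lie, s.lie_h₀_e₁, lie_zero]
  module

lemma lie_f₁_root₁₁ : ⁅f 1, root₁₁ e⁆ = -e 0 := by
  rw [root₁₁, leibniz_lie, s.lie_f_e_same, s.lie_f_e_ne one_ne_zero, zero_lie, lie_neg, lie_skew,
    s.lie_h₁_e₀]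
  module

lemma lie_f₀_root₂₁ : ⁅f 0, root₂₁ e⁆ = (4 : ℤ) • root₁₁ e := by
  rw [root₂₁, leibniz_lie, s.lie_f_e_same, s.lie_f₀_root₁₁, neg_lie,
    lie_root₁₁ s.lie_h₀_e₀ s.lie_h₀_e₁, lie_zsmul, ← root₁₁]
  module

lemma lie_f₁_root₂₁ : ⁅f 1, root₂₁ e⁆ = 0 := by
  rw [root₂₁, leibniz_lie, s.lie_f_e_ne one_ne_zero, s.lie_f₁_root₁₁, zero_lie, lie_neg, lie_self,
    neg_zero, add_zero]

lemma lie_f₀_root₃₁ : ⁅f 0, root₃₁ e⁆ = (3 : ℤ) • root₂₁ e := by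
  rw [root₃₁, leibniz_lie, s.lie_f_e_same, s.lie_f₀_root₂₁, neg_lie,
    lie_root₂₁ s.lie_h₀_e₀ s.lie_h₀_e₁, lie_zsmul, ← root₂₁]
  module

lemma lie_f₁_root₃₁ : ⁅f 1, root₃₁ e⁆ = 0 := by
  rw [root₃₁, leibniz_lie, s.lie_f_e_ne one_ne_zero, s.lie_f₁_root₂₁, zero_lie, lie_zero, add_zero]

lemma lie_f₀_root₃₂ : ⁅f 0, root₃₂ e⁆ = 0 := by
  rw [root₃₂, leibniz_lie, s.lie_f_e_ne zero_ne_one, s.lie_f₀_root₃₁, zero_lie, lie_zsmul,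
    s.lie_e₁_root₂₁, smul_zero, add_zero]

lemma lie_f₁_root₃₂ : ⁅f 1, root₃₂ e⁆ = root₃₁ e := by
  rw [root₃₂, leibniz_lie, s.lie_f_e_same, s.lie_f₁_root₃₁, neg_lie,
    lie_root₃₁ s.lie_h₁_e₀ s.lie_h₁_e₁, lie_zero]
  module

lemma lie_root₁₁_root₁₁_neg : ⁅root₁₁ e, root₁₁ f⁆ = -h 0 - (3 : ℤ) • h 1 := by
  conv_lhs => rw [root₁₁, lie_lie]
  rw [s.symm.lie_f₀_root₁₁, s.symm.lie_f₁_root₁₁, lie_neg, lie_zsmul, s.lie_e_f_same,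
    s.lie_e_f_same]

lemma lie_root₁₁_root₂₁_neg : ⁅root₁₁ e, root₂₁ f⁆ = (4 : ℤ) • f 0 := by
  rw [root₁₁, lie_lie, s.symm.lie_f₀_root₂₁, s.symm.lie_f₁_root₂₁, lie_zero, lie_zsmul,
    s.symm.lie_f₁_root₁₁]
  module

lemma lie_root₁₁_root₃₁_neg : ⁅root₁₁ e, root₃₁ f⁆ = 0 := by
  rw [root₁₁, lie_lie, s.symm.lie_f₀_root₃₁, s.symm.lie_f₁_root₃₁, lie_zero, lie_zsmul,
    s.symm.lie_f₁_root₂₁, smul_zero, sub_zero]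

lemma lie_root₁₁_root₃₂_neg : ⁅root₁₁ e, root₃₂ f⁆ = (3 : ℤ) • root₂₁ f := by
  rw [root₁₁, lie_lie, s.symm.lie_f₀_root₃₂, s.symm.lie_f₁_root₃₂, lie_zero, sub_zero,
    s.symm.lie_f₀_root₃₁]

lemma lie_root₂₁_root₂₁_neg : ⁅root₂₁ e, root₂₁ f⁆ = (8 : ℤ) • h 0 + (12 : ℤ) • h 1 := by
  conv_lhs => rw [root₂₁, lie_lie]
  rw [s.lie_root₁₁_root₂₁_neg, s.symm.lie_f₀_root₂₁, lie_zsmul, lie_zsmul, s.lie_e_f_same,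
    s.lie_root₁₁_root₁₁_neg]
  module

lemma lie_root₂₁_root₃₁_neg : ⁅root₂₁ e, root₃₁ f⁆ = (-12 : ℤ) • f 0 := by
  rw [root₂₁, lie_lie, s.lie_root₁₁_root₃₁_neg, s.symm.lie_f₀_root₃₁, lie_zero, lie_zsmul,
    s.lie_root₁₁_root₂₁_neg]
  module

lemma lie_root₂₁_root₃₂_neg : ⁅root₂₁ e, root₃₂ f⁆ = (12 : ℤ) • root₁₁ f := by
  rw [root₂₁, lie_lie, s.lie_root₁₁_root₃₂_neg, s.symm.lie_f₀_root₃₂, lie_zero, lie_zsmul,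
    s.symm.lie_f₀_root₂₁]
  module

lemma lie_root₃₁_root₃₁_neg : ⁅root₃₁ e, root₃₁ f⁆ = (-36 : ℤ) • h 0 - (36 : ℤ) • h 1 := by
  conv_lhs => rw [root₃₁, lie_lie]
  rw [s.lie_root₂₁_root₃₁_neg, s.symm.lie_f₀_root₃₁, lie_zsmul, lie_zsmul, s.lie_e_f_same,
    s.lie_root₂₁_root₂₁_neg]
  module

lemma lie_root₃₁_root₃₂_neg : ⁅root₃₁ e, root₃₂ f⁆ = (36 : ℤ) • f 1 := by
  rw [root₃₁, lie_lie, s.lie_root₂₁_root₃₂_neg, s.symm.lie_f₀_root₃₂, lie_zero, lie_zsmul,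
    s.symm.lie_f₀_root₁₁]
  module

lemma lie_root₃₂_root₃₂_neg : ⁅root₃₂ e, root₃₂ f⁆ = (36 : ℤ) • highestCoroot h := by
  conv_lhs => rw [root₃₂, lie_lie]
  rw [s.lie_root₃₁_root₃₂_neg, s.symm.lie_f₁_root₃₂, lie_zsmul, s.lie_e_f_same,
    s.lie_root₃₁_root₃₁_neg, highestCoroot]
  module

lemma lie_root₃₁_root₃₂ [IsAddTorsionFree L] : ⁅root₃₁ e, root₃₂ e⁆ = 0 := by
  have lie_root₁₁ : ⁅root₁₁ e, root₃₂ e⁆ = 0 := by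
    rw [root₁₁, lie_lie, s.lie_e₀_root₃₂, s.lie_e₁_root₃₂, lie_zero, lie_zero, sub_zero]
  have lie_root₂₁ : ⁅root₂₁ e, root₃₂ e⁆ = 0 := by
    rw [root₂₁, lie_lie, lie_root₁₁, s.lie_e₀_root₃₂, lie_zero, lie_zero, sub_zero]
  rw [root₃₁, lie_lie, lie_root₂₁, s.lie_e₀_root₃₂, lie_zero, lie_zero, sub_zero]

end IsSerreSystem

end RootVectors

section Triangular

variable {R} {h e f : Fin 2 → L} {W : Submodule R L}

lemma mem_of_posRoot_mem (he : ∀ j, posRoot e j ∈ W) : ∀ i, e i ∈ W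
  | 0 => he 0
  | 1 => he 1

namespace IsSerreSystem

lemma lie_e_posRoot_mem [IsAddTorsionFree L] (s : IsSerreSystem CartanMatrix.G₂ h e f)
    (he : ∀ j, posRoot e j ∈ W) (i : Fin 2) (j : Fin 6) : ⁅e i, posRoot e j⁆ ∈ W := by
  match i, j with
  | 0, 0 => exact (lie_self (e 0)).symm ▸ W.zero_mem
  | 0, 1 => exact he 2
  | 0, 2 => exact he 3
  | 0, 3 => exact he 4
  | 0, 4 => exact s.lie_e₀_root₃₁.symm ▸ W.zero_mem
  | 0, 5 => exact s.lie_e₀_root₃₂.symm ▸ W.zero_mem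
  | 1, 0 => exact lie_skew (e 1) (e 0) ▸ W.neg_mem (he 2)
  | 1, 1 => exact (lie_self (e 1)).symm ▸ W.zero_mem
  | 1, 2 => exact s.lie_e₁_root₁₁.symm ▸ W.zero_mem
  | 1, 3 => exact s.lie_e₁_root₂₁.symm ▸ W.zero_mem
  | 1, 4 => exact he 5
  | 1, 5 => exact s.lie_e₁_root₃₂.symm ▸ W.zero_mem

lemma lie_f_posRoot_mem (s : IsSerreSystem CartanMatrix.G₂ h e f) (hh : ∀ i, h i ∈ W)
    (he : ∀ j, posRoot e j ∈ W) (i : Fin 2) (j : Fin 6) : ⁅f i, posRoot e j⁆ ∈ W := by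
  match i, j with
  | 0, 0 => exact (s.lie_f_e_same 0).symm ▸ W.neg_mem (hh 0)
  | 0, 1 => exact (s.lie_f_e_ne zero_ne_one).symm ▸ W.zero_mem
  | 0, 2 => exact s.lie_f₀_root₁₁.symm ▸ zsmul_mem (he 1) 3
  | 0, 3 => exact s.lie_f₀_root₂₁.symm ▸ zsmul_mem (he 2) 4
  | 0, 4 => exact s.lie_f₀_root₃₁.symm ▸ zsmul_mem (he 3) 3
  | 0, 5 => exact s.lie_f₀_root₃₂.symm ▸ W.zero_mem
  | 1, 0 => exact (s.lie_f_e_ne one_ne_zero).symm ▸ W.zero_mem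
  | 1, 1 => exact (s.lie_f_e_same 1).symm ▸ W.neg_mem (hh 1)
  | 1, 2 => exact s.lie_f₁_root₁₁.symm ▸ W.neg_mem (he 0)
  | 1, 3 => exact s.lie_f₁_root₂₁.symm ▸ W.zero_mem
  | 1, 4 => exact s.lie_f₁_root₃₁.symm ▸ W.zero_mem
  | 1, 5 => exact s.lie_f₁_root₃₂.symm ▸ he 4

lemma lie_e_h_mem (s : IsSerreSystem CartanMatrix.G₂ h e f) (he : ∀ j, posRoot e j ∈ W)
    (i j : Fin 2) : ⁅e i, h j⁆ ∈ W := by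
  rw [← lie_skew, s.lie_h_e]
  exact W.neg_mem (zsmul_mem (mem_of_posRoot_mem he i) _)

lemma span_posRoot_eq_top [IsAddTorsionFree L] (s : IsSerreSystem CartanMatrix.G₂ h e f)
    (generate : LieSubalgebra.lieSpan R L (Set.range e ∪ Set.range f) = ⊤) :
    Submodule.span R (Set.range (posRoot e) ∪ Set.range h ∪ Set.range (posRoot f)) = ⊤ := by
  set W := Submodule.span R (Set.range (posRoot e) ∪ Set.range h ∪ Set.range (posRoot f))
  have he (j : Fin 6) : posRoot e j ∈ W := Submodule.subset_span (.inl (.inl ⟨j, rfl⟩))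
  have hh (i : Fin 2) : h i ∈ W := Submodule.subset_span (.inl (.inr ⟨i, rfl⟩))
  have hf (j : Fin 6) : posRoot f j ∈ W := Submodule.subset_span (.inr ⟨j, rfl⟩)
  have hh' (i : Fin 2) : (-h) i ∈ W := W.neg_mem (hh i)
  refine span_eq_top_of_lieSpan_eq_top generate ?_ ?_
  · rintro _ (⟨i, rfl⟩ | ⟨i, rfl⟩)
    exacts [mem_of_posRoot_mem he i, mem_of_posRoot_mem hf i]
  · rintro _ (⟨i, rfl⟩ | ⟨i, rfl⟩) _ ((⟨j, rfl⟩ | ⟨j, rfl⟩) | ⟨j, rfl⟩)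
    · exact s.lie_e_posRoot_mem he i j
    · exact s.lie_e_h_mem he i j
    · exact s.symm.lie_f_posRoot_mem hh' hf i j
    · exact s.lie_f_posRoot_mem hh he i j
    · exact neg_mem_iff.1 (lie_neg (f i) (h j) ▸ s.symm.lie_e_h_mem hf i j)
    · exact s.symm.lie_e_posRoot_mem hf i j

end IsSerreSystem

end Triangular

section Grading

lemma right_ne_zero_of_lie_ne_zero {x y : L} (hxy : ⁅x, y⁆ ≠ 0) : y ≠ 0 := by
  rintro rfl
  exact hxy (lie_zero x)

variable {R} {h e f : Fin 2 → L}

/-- The element of the Cartan subalgebra of `G₂` acting on root vectors by the height of the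
root. -/
def heightElement (h : Fin 2 → L) : L := (3 : ℤ) • h 0 + (5 : ℤ) • h 1

lemma posRoot_mem_gradePiece {z : L} {n : ℤ} (hz : ∀ i, e i ∈ gradePiece R z n) (j : Fin 6) :
    posRoot e j ∈ gradePiece R z
      (![n, n, n + n, n + (n + n), n + (n + (n + n)), n + (n + (n + (n + n)))] j) := by
  have h₁₁ : root₁₁ e ∈ gradePiece R z (n + n) := lie_mem_gradePiece (hz 0) (hz 1)
  have h₂₁ := lie_mem_gradePiece (hz 0) h₁₁
  have h₃₁ := lie_mem_gradePiece (hz 0) h₂₁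
  match j with
  | 0 => exact hz 0
  | 1 => exact hz 1
  | 2 => exact h₁₁
  | 3 => exact h₂₁
  | 4 => exact h₃₁
  | 5 => exact lie_mem_gradePiece (hz 1) h₃₁

namespace IsSerreSystem

lemma posRoot_ne_zero [IsAddTorsionFree L] (s : IsSerreSystem CartanMatrix.G₂ h e f)
    (hh : h 0 ≠ 0) (j : Fin 6) : posRoot e j ≠ 0 := by
  have h₀ : e 0 ≠ 0 := fun he ↦ hh (by rw [← s.lie_e_f_same, he, zero_lie])
  have h₁ : h 1 ≠ 0 := by
    intro hzero
    have : (-1 : ℤ) • e 0 = 0 := by rw [← s.lie_h₁_e₀, hzero, zero_lie]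
    exact h₀ (by simpa using this)
  have h₁₁ : root₁₁ e ≠ 0 :=
    right_ne_zero_of_lie_ne_zero (s.lie_f₁_root₁₁ ▸ neg_ne_zero.2 h₀)
  have h₂₁ : root₂₁ e ≠ 0 :=
    right_ne_zero_of_lie_ne_zero (s.lie_f₀_root₂₁ ▸ smul_ne_zero four_ne_zero h₁₁)
  have h₃₁ : root₃₁ e ≠ 0 :=
    right_ne_zero_of_lie_ne_zero (s.lie_f₀_root₃₁ ▸ smul_ne_zero three_ne_zero h₂₁)
  match j with
  | 0 => exact h₀
  | 1 => exact right_ne_zero_of_lie_ne_zero (s.lie_f_e_same 1 ▸ neg_ne_zero.2 h₁)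
  | 2 => exact h₁₁
  | 3 => exact h₂₁
  | 4 => exact h₃₁
  | 5 => exact right_ne_zero_of_lie_ne_zero (s.lie_f₁_root₃₂ ▸ h₃₁)

lemma lie_highestCoroot_e₀ (s : IsSerreSystem CartanMatrix.G₂ h e f) :
    ⁅highestCoroot h, e 0⁆ = (0 : ℤ) • e 0 := by
  rw [highestCoroot, add_lie, zsmul_lie, s.lie_h₀_e₀, s.lie_h₁_e₀]
  module

lemma lie_highestCoroot_e₁ (s : IsSerreSystem CartanMatrix.G₂ h e f) :
    ⁅highestCoroot h, e 1⁆ = (1 : ℤ) • e 1 := by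
  rw [highestCoroot, add_lie, zsmul_lie, s.lie_h₀_e₁, s.lie_h₁_e₁]
  module

lemma lie_heightElement_e (s : IsSerreSystem CartanMatrix.G₂ h e f) :
    ∀ i, ⁅heightElement h, e i⁆ = (1 : ℤ) • e i
  | 0 => by
    rw [heightElement, add_lie, zsmul_lie, zsmul_lie, s.lie_h₀_e₀, s.lie_h₁_e₀]
    module
  | 1 => by
    rw [heightElement, add_lie, zsmul_lie, zsmul_lie, s.lie_h₀_e₁, s.lie_h₁_e₁]
    module

lemma h_mem_gradePiece_height (s : IsSerreSystem CartanMatrix.G₂ h e f) (i : Fin 2) :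
    h i ∈ gradePiece R (heightElement h) 0 := by
  simp [mem_gradePiece_iff, heightElement, s.lie_h_h]

lemma posRoot_mem_gradePiece_height (s : IsSerreSystem CartanMatrix.G₂ h e f) (j : Fin 6) :
    posRoot e j ∈ gradePiece R (heightElement h) (![1, 1, 2, 3, 4, 5] j) :=
  posRoot_mem_gradePiece (fun i ↦ mem_gradePiece_iff.2 (s.lie_heightElement_e i)) j

lemma negRoot_mem_gradePiece_height (s : IsSerreSystem CartanMatrix.G₂ h e f) (j : Fin 6) :
    posRoot f j ∈ gradePiece R (heightElement h) (![-1, -1, -2, -3, -4, -5] j) := by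
  have heightElement_neg : heightElement (-h) = -heightElement h := by
    simp [heightElement, add_comm]
  refine posRoot_mem_gradePiece (fun i ↦ mem_gradePiece_iff.2 ?_) j
  rw [neg_smul, eq_neg_iff_add_eq_zero, ← s.symm.lie_heightElement_e i, heightElement_neg, neg_lie,
    add_neg_cancel]

end IsSerreSystem

end Grading

section Centralizer

variable {R} {h e f : Fin 2 → L}

/-- The family that together with the short simple root vector `e 0` is a basis of the centralizer
of `e 0` in `G₂`. -/
def centralizerFamily (h e f : Fin 2 → L) : Fin 5 → L :=
  ![root₃₁ e, f 1, root₃₂ e, root₃₂ f, highestCoroot h]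

/-- A basis of a complement of the centralizer of `e 0` in `G₂`. -/
def complementFamily (h e f : Fin 2 → L) : Fin 8 → L :=
  ![e 1, root₁₁ e, root₂₁ e, f 0, h 1, root₁₁ f, root₂₁ f, root₃₁ f]

namespace IsSerreSystem

lemma lie_e₀_h₁ (s : IsSerreSystem CartanMatrix.G₂ h e f) : ⁅e 0, h 1⁆ = e 0 := by
  rw [← lie_skew, s.lie_h₁_e₀, neg_smul, one_smul, neg_neg]

lemma linearIndependent_cons_centralizerFamily [CharZero R] [IsDomain R] [IsTorsionFree R L]
    (s : IsSerreSystem CartanMatrix.G₂ h e f) (hh : h 0 ≠ 0) :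
    LinearIndependent R (Fin.cons (e 0) (centralizerFamily h e f) : Fin 6 → L) := by
  have : IsAddTorsionFree L := .of_isTorsionFree R L
  have he := s.posRoot_ne_zero hh
  have hf := s.symm.posRoot_ne_zero (neg_ne_zero.2 hh)
  have hd : highestCoroot h ≠ 0 := fun hzero ↦ by
    have := s.lie_highestCoroot_e₁
    rw [hzero, zero_lie, one_smul] at this
    exact he 1 this.symm
  refine linearIndependent_of_mem_gradePiece (h := heightElement h) (n := ![1, 4, -1, 5, -5, 0])
    (by decide) (fun i ↦ ?_) fun i ↦ ?_
  · match i with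
    | 0 => exact s.posRoot_mem_gradePiece_height 0
    | 1 => exact s.posRoot_mem_gradePiece_height 4
    | 2 => exact s.negRoot_mem_gradePiece_height 1
    | 3 => exact s.posRoot_mem_gradePiece_height 5
    | 4 => exact s.negRoot_mem_gradePiece_height 5
    | 5 => exact add_mem (s.h_mem_gradePiece_height 0) (zsmul_mem (s.h_mem_gradePiece_height 1) 2)
  · match i with
    | 0 => exact he 0
    | 1 => exact he 4
    | 2 => exact hf 1
    | 3 => exact he 5
    | 4 => exact hf 5
    | 5 => exact hd

lemma linearIndependent_ad_complementFamily [CharZero R] [IsDomain R] [IsTorsionFree R L]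
    (s : IsSerreSystem CartanMatrix.G₂ h e f) (hh : h 0 ≠ 0) :
    LinearIndependent R (ad R L (e 0) ∘ complementFamily h e f) := by
  have : IsAddTorsionFree L := .of_isTorsionFree R L
  have he := s.posRoot_ne_zero hh
  have hf := s.symm.posRoot_ne_zero (neg_ne_zero.2 hh)
  refine linearIndependent_of_mem_gradePiece (h := heightElement h)
    (n := ![1 + 1, 1 + 2, 1 + 3, 1 + -1, 1 + 0, 1 + -2, 1 + -3, 1 + -4]) (by decide)
    (fun i ↦ ?_) fun i ↦ ?_
  · have he₀ : e 0 ∈ gradePiece R (heightElement h) 1 := s.posRoot_mem_gradePiece_height 0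
    match i with
    | 0 => exact lie_mem_gradePiece he₀ (s.posRoot_mem_gradePiece_height 1)
    | 1 => exact lie_mem_gradePiece he₀ (s.posRoot_mem_gradePiece_height 2)
    | 2 => exact lie_mem_gradePiece he₀ (s.posRoot_mem_gradePiece_height 3)
    | 3 => exact lie_mem_gradePiece he₀ (s.negRoot_mem_gradePiece_height 0)
    | 4 => exact lie_mem_gradePiece he₀ (s.h_mem_gradePiece_height 1)
    | 5 => exact lie_mem_gradePiece he₀ (s.negRoot_mem_gradePiece_height 2)
    | 6 => exact lie_mem_gradePiece he₀ (s.negRoot_mem_gradePiece_height 3)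
    | 7 => exact lie_mem_gradePiece he₀ (s.negRoot_mem_gradePiece_height 4)
  · match i with
    | 0 => exact he 2
    | 1 => exact he 3
    | 2 => exact he 4
    | 3 => exact (s.lie_e_f_same 0).trans_ne hh
    | 4 => exact s.lie_e₀_h₁.trans_ne (he 0)
    | 5 => exact s.symm.lie_f₀_root₁₁.trans_ne (smul_ne_zero three_ne_zero (hf 1))
    | 6 => exact s.symm.lie_f₀_root₂₁.trans_ne (smul_ne_zero four_ne_zero (hf 2))
    | 7 => exact s.symm.lie_f₀_root₃₁.trans_ne (smul_ne_zero three_ne_zero (hf 3))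

lemma lie_e₀_centralizerFamily [IsAddTorsionFree L] (s : IsSerreSystem CartanMatrix.G₂ h e f) :
    ∀ i, ⁅e 0, centralizerFamily h e f i⁆ = 0
  | 0 => s.lie_e₀_root₃₁
  | 1 => s.lie_e_f_ne zero_ne_one
  | 2 => s.lie_e₀_root₃₂
  | 3 => s.symm.lie_f₀_root₃₂
  | 4 => by
    rw [← lie_skew, neg_eq_zero]
    exact s.lie_highestCoroot_e₀.trans (zero_smul ℤ _)

lemma span_centralizerFamily_sup_complement [IsAddTorsionFree L]
    (s : IsSerreSystem CartanMatrix.G₂ h e f)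
    (generate : LieSubalgebra.lieSpan R L (Set.range e ∪ Set.range f) = ⊤) :
    Submodule.span R (Set.range (Fin.cons (e 0) (centralizerFamily h e f) : Fin 6 → L)) ⊔
      Submodule.span R (Set.range (complementFamily h e f)) = ⊤ := by
  set U := Submodule.span R (Set.range (Fin.cons (e 0) (centralizerFamily h e f) : Fin 6 → L))
  set W := Submodule.span R (Set.range (complementFamily h e f))
  have hu (i : Fin 6) : (Fin.cons (e 0) (centralizerFamily h e f) : Fin 6 → L) i ∈ U ⊔ W :=
    Submodule.mem_sup_left (Submodule.subset_span ⟨i, rfl⟩)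
  have hw (i : Fin 8) : complementFamily h e f i ∈ U ⊔ W :=
    Submodule.mem_sup_right (Submodule.subset_span ⟨i, rfl⟩)
  rw [eq_top_iff, ← s.span_posRoot_eq_top generate, Submodule.span_le]
  rintro _ ((⟨j, rfl⟩ | ⟨j, rfl⟩) | ⟨j, rfl⟩)
  · match j with
    | 0 => exact hu 0
    | 1 => exact hw 0
    | 2 => exact hw 1
    | 3 => exact hw 2
    | 4 => exact hu 1
    | 5 => exact hu 3
  · match j with
    | 0 => exact add_sub_cancel_right (h 0) ((2 : ℤ) • h 1) ▸ sub_mem (hu 5) (zsmul_mem (hw 4) 2)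
    | 1 => exact hw 4
  · match j with
    | 0 => exact hw 3
    | 1 => exact hu 2
    | 2 => exact hw 5
    | 3 => exact hw 6
    | 4 => exact hw 7
    | 5 => exact hu 4

lemma centralizerOf_e₀_eq_span [CharZero R] [IsDomain R] [IsTorsionFree R L]
    (s : IsSerreSystem CartanMatrix.G₂ h e f) (hh : h 0 ≠ 0)
    (generate : LieSubalgebra.lieSpan R L (Set.range e ∪ Set.range f) = ⊤) :
    (centralizerOf R (e 0)).toSubmodule =
      Submodule.span R (Set.range (Fin.cons (e 0) (centralizerFamily h e f) : Fin 6 → L)) := by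
  have : IsAddTorsionFree L := .of_isTorsionFree R L
  rw [centralizerOf_toSubmodule_eq_ker]
  exact ker_eq_span_range (s.span_centralizerFamily_sup_complement generate)
    (Fin.cases (lie_self (e 0)) s.lie_e₀_centralizerFamily)
    (s.linearIndependent_ad_complementFamily hh)

lemma highestCoroot_neg (h : Fin 2 → L) : highestCoroot (-h) = -highestCoroot h := by
  simp [highestCoroot, add_comm]

lemma lie_e₁_highestCoroot (s : IsSerreSystem CartanMatrix.G₂ h e f) :
    ⁅e 1, highestCoroot h⁆ = -e 1 := by
  rw [← lie_skew, s.lie_highestCoroot_e₁, one_smul]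

lemma lie_f₁_highestCoroot (s : IsSerreSystem CartanMatrix.G₂ h e f) :
    ⁅f 1, highestCoroot h⁆ = f 1 := by
  rw [← neg_inj, ← lie_neg, ← highestCoroot_neg, s.symm.lie_e₁_highestCoroot]

lemma lie_root₃₁_highestCoroot (s : IsSerreSystem CartanMatrix.G₂ h e f) :
    ⁅root₃₁ e, highestCoroot h⁆ = -root₃₁ e := by
  rw [← lie_skew, lie_root₃₁ s.lie_highestCoroot_e₀ s.lie_highestCoroot_e₁]
  module

lemma lie_root₃₂_highestCoroot (s : IsSerreSystem CartanMatrix.G₂ h e f) :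
    ⁅root₃₂ e, highestCoroot h⁆ = (-2 : ℤ) • root₃₂ e := by
  rw [← lie_skew, lie_root₃₂ s.lie_highestCoroot_e₀ s.lie_highestCoroot_e₁]
  module

lemma lie_root₃₂_highestCoroot_neg (s : IsSerreSystem CartanMatrix.G₂ h e f) :
    ⁅root₃₂ f, highestCoroot h⁆ = (2 : ℤ) • root₃₂ f := by
  rw [← neg_inj, ← lie_neg, ← highestCoroot_neg, s.symm.lie_root₃₂_highestCoroot, neg_smul]

lemma lie_centralizerFamily_mem [IsAddTorsionFree L] (s : IsSerreSystem CartanMatrix.G₂ h e f)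
    (i j : Fin 5) (hij : i < j) : ⁅centralizerFamily h e f i, centralizerFamily h e f j⁆ ∈
      Submodule.span R (Set.range (centralizerFamily h e f)) := by
  set W := Submodule.span R (Set.range (centralizerFamily h e f))
  have mem (k : Fin 5) : centralizerFamily h e f k ∈ W := Submodule.subset_span ⟨k, rfl⟩
  have lie_root₃₁_f₁ : ⁅root₃₁ e, f 1⁆ = 0 := by rw [← lie_skew, s.lie_f₁_root₃₁, neg_zero]
  match i, j, hij with
  | 0, 1, _ => exact lie_root₃₁_f₁.symm ▸ W.zero_mem
  | 0, 2, _ => exact s.lie_root₃₁_root₃₂.symm ▸ W.zero_mem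
  | 0, 3, _ => exact s.lie_root₃₁_root₃₂_neg.symm ▸ zsmul_mem (mem 1) 36
  | 0, 4, _ => exact s.lie_root₃₁_highestCoroot.symm ▸ W.neg_mem (mem 0)
  | 1, 2, _ => exact s.lie_f₁_root₃₂.symm ▸ mem 0
  | 1, 3, _ => exact s.symm.lie_e₁_root₃₂.symm ▸ W.zero_mem
  | 1, 4, _ => exact s.lie_f₁_highestCoroot.symm ▸ mem 1
  | 2, 3, _ => exact s.lie_root₃₂_root₃₂_neg.symm ▸ zsmul_mem (mem 4) 36
  | 2, 4, _ => exact s.lie_root₃₂_highestCoroot.symm ▸ zsmul_mem (mem 2) (-2)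
  | 3, 4, _ => exact s.lie_root₃₂_highestCoroot_neg.symm ▸ zsmul_mem (mem 3) 2
  | 4, _, four_lt => exact absurd four_lt (Fin.le_last _).not_gt

variable {K : Type*} [Field K] [CharZero K] [LieAlgebra K L]

lemma centralizerFamily_mem_derivedOf (s : IsSerreSystem CartanMatrix.G₂ h e f) (i : Fin 5) :
    centralizerFamily h e f i ∈ derivedOf K (centralizerOf K (e 0)) := by
  have : IsAddTorsionFree L := .of_isTorsionFree K L
  have mem (k : Fin 5) : centralizerFamily h e f k ∈ centralizerOf K (e 0) := by
    change ⁅centralizerFamily h e f k, e 0⁆ = 0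
    rw [← lie_skew, s.lie_e₀_centralizerFamily, neg_zero]
  have f₁_mem : f 1 ∈ centralizerOf K (e 0) := mem 1
  have root₃₂_mem : root₃₂ e ∈ centralizerOf K (e 0) := mem 2
  have root₃₂_neg_mem : root₃₂ f ∈ centralizerOf K (e 0) := mem 3
  have highestCoroot_mem : highestCoroot h ∈ centralizerOf K (e 0) := mem 4
  match i with
  | 0 => exact mem_derivedOf_of_lie_eq_zsmul f₁_mem root₃₂_mem one_ne_zero
            (s.lie_f₁_root₃₂.trans (one_zsmul _).symm)
  | 1 => exact mem_derivedOf_of_lie_eq_zsmul f₁_mem highestCoroot_mem one_ne_zero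
            (s.lie_f₁_highestCoroot.trans (one_zsmul _).symm)
  | 2 => exact mem_derivedOf_of_lie_eq_zsmul root₃₂_mem highestCoroot_mem
            (neg_ne_zero.2 two_ne_zero) s.lie_root₃₂_highestCoroot
  | 3 => exact mem_derivedOf_of_lie_eq_zsmul root₃₂_neg_mem highestCoroot_mem two_ne_zero
            s.lie_root₃₂_highestCoroot_neg
  | 4 => exact mem_derivedOf_of_lie_eq_zsmul root₃₂_mem root₃₂_neg_mem (OfNat.ofNat_ne_zero 36)
            s.lie_root₃₂_root₃₂_neg

lemma derivedOf_centralizerOf_e₀_eq_span (s : IsSerreSystem CartanMatrix.G₂ h e f) (hh : h 0 ≠ 0)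
    (generate : LieSubalgebra.lieSpan K L (Set.range e ∪ Set.range f) = ⊤) :
    derivedOf K (centralizerOf K (e 0)) =
      Submodule.span K (Set.range (centralizerFamily h e f)) := by
  have : IsAddTorsionFree L := .of_isTorsionFree K L
  refine derivedOf_centralizerOf_eq_span ?_ s.lie_centralizerFamily_mem
    s.centralizerFamily_mem_derivedOf
  rw [s.centralizerOf_e₀_eq_span hh generate, Fin.range_cons]

end IsSerreSystem

end Centralizer

theorem exists_sl2Triple_g₂_general (K : Type*) [Field K] [CharZero K] :
    ∃ e h f : LieAlgebra.g₂ K, IsSl2Triple h e f ∧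
      Module.finrank K (centralizerOf K e).toSubmodule = 6 ∧
      Module.finrank K (derivedOf K (centralizerOf K e)) = 5 ∧
      e ∉ derivedOf K (centralizerOf K e) ∧
      (centralizerOf K e).toSubmodule
        = Submodule.span K {e} ⊔ derivedOf K (centralizerOf K e) ∧
      Submodule.span K {e} ⊓ derivedOf K (centralizerOf K e) = ⊥ := by
  have s := isSerreSystem_serre K CartanMatrix.G₂
  have hh := serreH_G₂_ne_zero K
  have generate := lieSpan_serre_eq_top K CartanMatrix.G₂
  have independent := s.linearIndependent_cons_centralizerFamily (R := K) hh
  obtain ⟨independent_derived, e_notMem⟩ := linearIndependent_finCons.1 independent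
  refine ⟨_, _, _, s.isSl2Triple rfl hh, ?_⟩
  rw [s.derivedOf_centralizerOf_e₀_eq_span hh generate, s.centralizerOf_e₀_eq_span hh generate]
  refine ⟨finrank_span_eq_card independent, finrank_span_eq_card independent_derived, e_notMem, ?_,
    (Submodule.disjoint_span_singleton_of_notMem e_notMem).symm.eq_bot⟩
  rw [Fin.range_cons, Submodule.span_insert]

/-- In the simple complex Lie algebra of type G₂ there is an `sl₂`-triple `(e,h,f)`
such that `dim g_e = 6`, `dim [g_e, g_e] = 5`, `e ∉ [g_e, g_e]`, and hence `g_e` is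
the direct sum of the span of `e` and `[g_e, g_e]`. -/
theorem exists_sl2Triple_g₂ :
    ∃ e h f : LieAlgebra.g₂ ℂ, IsSl2Triple h e f ∧
      Module.finrank ℂ (centralizerOf ℂ e).toSubmodule = 6 ∧
      Module.finrank ℂ (derivedOf ℂ (centralizerOf ℂ e)) = 5 ∧
      e ∉ derivedOf ℂ (centralizerOf ℂ e) ∧
      (centralizerOf ℂ e).toSubmodule
        = Submodule.span ℂ {e} ⊔ derivedOf ℂ (centralizerOf ℂ e) ∧
      Submodule.span ℂ {e} ⊓ derivedOf ℂ (centralizerOf ℂ e) = ⊥ :=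
  exists_sl2Triple_g₂_general ℂ

end PaperStmt
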